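/- If the fourth smallest eigenvalue of the rigidity Laplacian is positive, λ_4(E(G,p)) > 0 (equivalently rank E(G,p) ≥ 2n − 3), then rank(H) = n − 1 and the graph G is connected. That is, maintenance of rigidity implies maintenance of graph connectivity. -/

import Mathlib

open Matrix
open scoped Kronecker

noncomputable section

/-- Incidence matrix of the graph whose `k`-th (oriented) edge goes from vertex `t k`
to vertex `h k`: entry `1` where the edge sinks, `-1` where it leaves, `0` otherwise. -/
def inc {n m : ℕ} (t h : Fin m → Fin n) : Matrix (Fin m) (Fin n) ℝ :=
  fun k i => if i = h k then 1 else if i = t k then -1 else 0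

/-- `H̄ = H ⊗ I₂ ∈ ℝ^{2m × 2n}`. -/
def Hbar {n m : ℕ} (t h : Fin m → Fin n) : Matrix (Fin m × Fin 2) (Fin n × Fin 2) ℝ :=
  inc t h ⊗ₖ (1 : Matrix (Fin 2) (Fin 2) ℝ)

/-- The relative position `z_k = p_i - p_j` for the `k`-th edge, oriented from
`j = t k` to `i = h k`; these are the 2-dimensional blocks of `z = H̄ p`. -/
def zvec {n m : ℕ} (t h : Fin m → Fin n) (p : Fin n → Fin 2 → ℝ) (k : Fin m) : Fin 2 → ℝ :=
  fun a => p (h k) a - p (t k) a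

/-- `Z = blockdiag(z₁, …, z_m) ∈ ℝ^{2m × m}`. -/
def Zmat {n m : ℕ} (t h : Fin m → Fin n) (p : Fin n → Fin 2 → ℝ) :
    Matrix (Fin m × Fin 2) (Fin m) ℝ :=
  fun ka l => if ka.1 = l then zvec t h p ka.1 ka.2 else 0

/-- The rigidity matrix `R(p) = Zᵀ H̄ ∈ ℝ^{m × 2n}`. -/
def rigMat {n m : ℕ} (t h : Fin m → Fin n) (p : Fin n → Fin 2 → ℝ) :
    Matrix (Fin m) (Fin n × Fin 2) ℝ :=
  (Zmat t h p)ᵀ * Hbar t h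


/-- The `i`-th smallest value (0-indexed, counted with multiplicity) of a finite family
of reals, obtained by sorting the values in increasing order. -/
def kthSmallest {ι : Type*} [Fintype ι] (f : ι → ℝ) (i : ℕ) : ℝ :=
  ((Finset.univ.val.map f).sort (· ≤ ·)).getD i 0

/-!
The kernel of the incidence matrix `H` consists of the functions that are constant on the connected
components of `G`, so `rank H + c = n`, where `c` is the number of components. A positive fourth
eigenvalue leaves at most three zero eigenvalues of the positive semidefinite matrix `E`, that is,
`rank E ≥ 2n - 3`. Since `H̄ = H ⊗ I₂` is a factor of `E`, we have `rank E ≤ rank H̄ = 2 rank H`.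
Hence `2n - 3 ≤ 2(n - c)`, which forces `c = 1`.
-/

section OrderStatistics

theorem lt_getD_iff_countP_le_of_pairwise {α : Type*} [LinearOrder α] {l : List α}
    (hl : l.Pairwise (· ≤ ·)) (a d : α) {i : ℕ} (hi : i < l.length) :
    a < l.getD i d ↔ l.countP (· ≤ a) ≤ i := by
  induction l generalizing i with
  | nil => simp at hi
  | cons x l ih =>
    obtain ⟨hx, hl⟩ := List.pairwise_cons.mp hl
    by_cases hxa : x ≤ a
    · cases i with
      | zero => simp [hxa]
      | succ i => simpa [hxa] using ih hl (Nat.lt_of_succ_lt_succ hi)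
    · have hlt : ∀ y ∈ x :: l, a < y := by
        simpa [lt_of_not_ge hxa] using fun y hy => (lt_of_not_ge hxa).trans_le (hx y hy)
      have hcount : (x :: l).countP (· ≤ a) = 0 := by
        simpa only [List.countP_eq_zero, decide_eq_true_eq, not_le] using hlt
      rw [List.getD_eq_getElem _ _ hi, hcount]
      exact iff_of_true (hlt _ (List.getElem_mem hi)) i.zero_le

theorem lt_kthSmallest_iff_card_le {ι : Type*} [Fintype ι] (f : ι → ℝ) (a : ℝ) {i : ℕ}
    (hi : i < Fintype.card ι) :
    a < kthSmallest f i ↔ Fintype.card {j // f j ≤ a} ≤ i := by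
  have hlength : ((Finset.univ.val.map f).sort (· ≤ ·)).length = Fintype.card ι := by
    simp
  have hcount : ((Finset.univ.val.map f).sort (· ≤ ·)).countP (· ≤ a) =
      Fintype.card {j // f j ≤ a} := by
    rw [← Multiset.coe_countP, Multiset.sort_eq, Multiset.countP_map, Fintype.card_subtype]
    rfl
  rw [kthSmallest, lt_getD_iff_countP_le_of_pairwise (Multiset.pairwise_sort _ _) _ _
    (hlength ▸ hi), hcount]

open scoped ComplexOrder in
theorem kthSmallest_eigenvalues_pos_iff {ι 𝕜 : Type*} [Fintype ι] [DecidableEq ι] [RCLike 𝕜]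
    {A : Matrix ι ι 𝕜} (hA : A.PosSemidef) {i : ℕ} (hi : i < Fintype.card ι) :
    0 < kthSmallest hA.isHermitian.eigenvalues i ↔ Fintype.card ι - i ≤ A.rank := by
  have hzero : Fintype.card {j // hA.isHermitian.eigenvalues j ≤ 0} =
      Fintype.card ι - A.rank := by
    simp_rw [(hA.eigenvalues_nonneg _).ge_iff_eq']
    rw [hA.isHermitian.rank_eq_card_non_zero_eigs, Fintype.card_subtype_compl,
      Nat.sub_sub_self (Fintype.card_subtype_le _)]
  rw [lt_kthSmallest_iff_card_le _ _ hi, hzero, tsub_le_iff_tsub_le]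

end OrderStatistics

section Kronecker

theorem finrank_range_tensorProduct_map {K V V' W W' : Type*} [Field K]
    [AddCommGroup V] [Module K V] [AddCommGroup V'] [Module K V']
    [AddCommGroup W] [Module K W] [AddCommGroup W'] [Module K W']
    (f : V →ₗ[K] V') (g : W →ₗ[K] W') :
    Module.finrank K (TensorProduct.map f g).range =
      Module.finrank K f.range * Module.finrank K g.range := by
  have hinj : Function.Injective (TensorProduct.mapIncl f.range g.range) :=
    TensorProduct.map_injective_of_flat_flat _ _ f.range.injective_subtype
      g.range.injective_subtype
  rw [TensorProduct.range_map, ← TensorProduct.range_mapIncl,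
    LinearMap.finrank_range_of_inj hinj, Module.finrank_tensorProduct]

theorem rank_kronecker {K l m n p : Type*} [Field K] [Finite l] [Fintype m] [Finite n] [Fintype p]
    (A : Matrix l m K) (B : Matrix n p K) : (A ⊗ₖ B).rank = A.rank * B.rank := by
  classical
  let bl := Pi.basisFun K l
  let bm := Pi.basisFun K m
  let bn := Pi.basisFun K n
  let bp := Pi.basisFun K p
  have := Fintype.ofFinite l
  have := Fintype.ofFinite n
  rw [rank_eq_finrank_range_toLin _ (bl.tensorProduct bn) (bm.tensorProduct bp),
    toLin_kronecker, finrank_range_tensorProduct_map, ← rank_eq_finrank_range_toLin,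
    ← rank_eq_finrank_range_toLin]

end Kronecker

theorem connected_iff_card_connectedComponent_eq_one {V : Type*} {G : SimpleGraph V} :
    G.Connected ↔ Nat.card G.ConnectedComponent = 1 := by
  rw [Nat.card_eq_one_iff_unique]
  constructor
  · intro hG
    exact ⟨hG.preconnected.subsingleton_connectedComponent,
      hG.nonempty.map G.connectedComponentMk⟩
  · rintro ⟨_, ⟨c⟩⟩
    exact { preconnected := fun i j => SimpleGraph.ConnectedComponent.exact (Subsingleton.elim _ _)
            nonempty := ⟨c.out⟩ }

section Incidence

variable {n m : ℕ} {t h : Fin m → Fin n}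

theorem rank_Hbar (t h : Fin m → Fin n) : (Hbar t h).rank = 2 * (inc t h).rank := by
  rw [Hbar, rank_kronecker, rank_one, Fintype.card_fin, mul_comm]

/-- The underlying simple graph of the oriented edge list `t k → h k`, in which parallel edges are
identified and loops are dropped. -/
def edgeGraph (t h : Fin m → Fin n) : SimpleGraph (Fin n) :=
  SimpleGraph.fromRel fun i j => ∃ k, t k = i ∧ h k = j

theorem forall_edgeGraph_adj_eq_iff {α : Type*} (u : Fin n → α) :
    (∀ i j, (edgeGraph t h).Adj i j → u i = u j) ↔ ∀ k, u (t k) = u (h k) := by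
  constructor
  · intro hu k
    by_contra hne
    exact hne (hu _ _ ⟨ne_of_apply_ne u hne, .inl ⟨k, rfl, rfl⟩⟩)
  · rintro hu _ _ ⟨-, ⟨k, rfl, rfl⟩ | ⟨k, rfl, rfl⟩⟩
    exacts [hu k, (hu k).symm]

theorem inc_mulVec_apply (hloop : ∀ k, t k ≠ h k) (u : Fin n → ℝ) (k : Fin m) :
    (inc t h *ᵥ u) k = u (h k) - u (t k) := by
  have hrow : inc t h k = Pi.single (h k) 1 - Pi.single (t k) 1 := by
    ext i
    by_cases hi : i = h k
    · simp [inc, hi, (hloop k).symm]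
    · simp [inc, hi, Pi.single_apply, neg_ite]
  rw [mulVec, hrow, sub_dotProduct, single_one_dotProduct, single_one_dotProduct]

theorem ker_inc_eq_ker_lapMatrix (hloop : ∀ k, t k ≠ h k) [DecidableRel (edgeGraph t h).Adj] :
    (inc t h).mulVecLin.ker = ((edgeGraph t h).lapMatrix ℝ).mulVecLin.ker := by
  ext u
  rw [LinearMap.mem_ker, LinearMap.mem_ker, mulVecLin_apply, mulVecLin_apply,
    SimpleGraph.lapMatrix_mulVec_eq_zero_iff_forall_adj,
    forall_edgeGraph_adj_eq_iff, funext_iff]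
  simp only [inc_mulVec_apply hloop, Pi.zero_apply, sub_eq_zero, eq_comm]

theorem rank_inc_add_card_connectedComponent (hloop : ∀ k, t k ≠ h k) :
    (inc t h).rank + Nat.card (edgeGraph t h).ConnectedComponent = n := by
  classical
  rw [Nat.card_eq_fintype_card,
    SimpleGraph.card_connectedComponent_eq_finrank_ker_toLin'_lapMatrix, toLin'_apply',
    ← ker_inc_eq_ker_lapMatrix hloop, rank, LinearMap.finrank_range_add_finrank_ker,
    Module.finrank_fin_fun]

theorem rank_inc_lt [NeZero n] (hloop : ∀ k, t k ≠ h k) : (inc t h).rank < n := by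
  have hcard : 0 < Nat.card (edgeGraph t h).ConnectedComponent := Nat.card_pos
  have hsum := rank_inc_add_card_connectedComponent hloop
  lia

theorem connected_edgeGraph_iff_rank_inc (hloop : ∀ k, t k ≠ h k) :
    (edgeGraph t h).Connected ↔ (inc t h).rank + 1 = n := by
  have hsum := rank_inc_add_card_connectedComponent hloop
  rw [connected_iff_card_connectedComponent_eq_one]
  lia

end Incidence

section Rigidity

variable {n m : ℕ} {t h : Fin m → Fin n} {p : Fin n → Fin 2 → ℝ} {w : Fin m → ℝ}

/-- The rigidity Laplacian `E(G,p) = H̄ᵀ Z W Zᵀ H̄` of the framework `p` on the oriented edge list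
`t k → h k`, where `W` is the diagonal matrix of the edge weights `w`. -/
def rigidityLaplacian (t h : Fin m → Fin n) (p : Fin n → Fin 2 → ℝ) (w : Fin m → ℝ) :
    Matrix (Fin n × Fin 2) (Fin n × Fin 2) ℝ :=
  (Hbar t h)ᵀ * (Zmat t h p * diagonal w * (Zmat t h p)ᵀ) * Hbar t h

theorem posSemidef_rigidityLaplacian (hw : 0 ≤ w) : (rigidityLaplacian t h p w).PosSemidef := by
  simpa only [rigidityLaplacian, conjTranspose_eq_transpose_of_trivial] using
    ((PosSemidef.diagonal hw).mul_mul_conjTranspose_same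
      (Zmat t h p)).conjTranspose_mul_mul_same (Hbar t h)

theorem rank_rigidityLaplacian_le : (rigidityLaplacian t h p w).rank ≤ 2 * (inc t h).rank :=
  (rank_mul_le_right _ _).trans_eq (rank_Hbar t h)

theorem rank_inc_of_le_rank_rigidityLaplacian [NeZero n] (hloop : ∀ k, t k ≠ h k)
    (hrank : 2 * n - 3 ≤ (rigidityLaplacian t h p w).rank) : (inc t h).rank + 1 = n := by
  have hlt := rank_inc_lt hloop
  have hle := hrank.trans rank_rigidityLaplacian_le
  lia

end Rigidity

/-- if the fourth smallest eigenvalue (counted with multiplicity) of the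
rigidity Laplacian `E(G,p) = H̄ᵀ Z W Zᵀ H̄` is positive — equivalently, since `E` is
positive semidefinite, `rank E ≥ 2n - 3` — then the incidence matrix has rank `n - 1`
and the graph is connected. -/
theorem stmt12 {n m : ℕ} (hn : 2 ≤ n) (t h : Fin m → Fin n) (hloop : ∀ k, t k ≠ h k)
    (p : Fin n → Fin 2 → ℝ) (w : Fin m → ℝ) (hw : ∀ k, 0 < w k)
    (E : Matrix (Fin n × Fin 2) (Fin n × Fin 2) ℝ)
    (hE : E = (Hbar t h)ᵀ * (Zmat t h p * Matrix.diagonal w * (Zmat t h p)ᵀ) * Hbar t h)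
    (hEherm : E.IsHermitian)
    (G : SimpleGraph (Fin n))
    (hG : G = SimpleGraph.fromRel (fun i j => ∃ k, t k = i ∧ h k = j)) :
    (0 < kthSmallest hEherm.eigenvalues 3 ↔ 2 * n - 3 ≤ E.rank) ∧
    (0 < kthSmallest hEherm.eigenvalues 3 → (inc t h).rank = n - 1 ∧ G.Connected) := by
  have hpsd : E.PosSemidef := hE ▸ posSemidef_rigidityLaplacian fun k => (hw k).le
  have hcard : Fintype.card (Fin n × Fin 2) = 2 * n := by
    rw [Fintype.card_prod, Fintype.card_fin, Fintype.card_fin, mul_comm]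
  have hiff : 0 < kthSmallest hEherm.eigenvalues 3 ↔ 2 * n - 3 ≤ E.rank := by
    rw [kthSmallest_eigenvalues_pos_iff hpsd (by lia), hcard]
  refine ⟨hiff, fun hpos => ?_⟩
  have : NeZero n := ⟨by lia⟩
  have hrank : (inc t h).rank + 1 = n :=
    rank_inc_of_le_rank_rigidityLaplacian hloop (hE ▸ hiff.mp hpos)
  exact ⟨Nat.eq_sub_of_add_eq hrank, hG ▸ (connected_edgeGraph_iff_rank_inc hloop).mpr hrank⟩
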